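/- arXiv:1507.02341 — 3 statements merged into one kernel-verified Lean document; each statement's English description precedes it below -/
import Mathlib

section
/- Let p(x) = a_n x^n + ... + a_1 x + a_0 be a real polynomial of degree n (so a_n ≠ 0) all of whose roots are real. Then the coefficient sequence a_0, a_1, ..., a_n is log-concave, i.e., a_j^2 ≥ a_{j−1}·a_{j+1} for all j = 1, ..., n−1. -/
/-!
A real-rooted polynomial splits over `ℝ`, and by Rolle's theorem (counted with multiplicity) so do
all its derivatives. Every split `f` satisfies the Laguerre-type inequality `f * f'' ≤ f' ^ 2`
pointwise, because `f' ^ 2 - f * f''` is nonnegative for constants and linear polynomials and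
`(f g)' ^ 2 - (f g) (f g)'' = g ^ 2 (f' ^ 2 - f f'') + f ^ 2 (g' ^ 2 - g g'')`.

Applying this at `0` to the `k`-th derivative of `p = ∑ aᵢ xⁱ`, whose value and first two
derivatives there are `k! aₖ`, `(k+1)! aₖ₊₁`, `(k+2)! aₖ₊₂`, gives
`(k + 2) aₖ aₖ₊₂ ≤ (k + 1) aₖ₊₁ ^ 2`, which is stronger than log-concavity.
-/

open Polynomial

/-- A real polynomial is real-rooted if all of its complex roots are real. -/
def RealRooted (p : Polynomial ℝ) : Prop :=
  ∀ z : ℂ, Polynomial.aeval z p = 0 → z.im = 0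

theorem RealRooted.splits {p : ℝ[X]} (hp : RealRooted p) : p.Splits := by
  refine Splits.of_splits_map (algebraMap ℝ ℂ) (IsAlgClosed.splits _) fun z hz => ?_
  have h0 : aeval z p = 0 := by
    have := (mem_roots'.1 hz).2
    rwa [IsRoot.def, eval_map_algebraMap] at this
  exact ⟨z.re, Complex.ext (by simp) (by simp [hp z h0])⟩

/-- Rolle's theorem: `f'` has at most one real root fewer than `f`, as its degree demands. -/
theorem splits_derivative {f : ℝ[X]} (hf : f.Splits) : (derivative f).Splits := by
  rcases Nat.eq_zero_or_pos f.natDegree with h | h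
  · rw [derivative_of_natDegree_zero h]
    exact Splits.zero
  · rw [splits_iff_card_roots] at hf ⊢
    have h1 := card_roots_le_derivative f
    have h2 := card_roots' (derivative f)
    have h3 := natDegree_derivative_lt h.ne'
    omega

theorem splits_iterate_derivative {f : ℝ[X]} (hf : f.Splits) (k : ℕ) :
    (derivative^[k] f).Splits := by
  induction k with
  | zero => exact hf
  | succ k ih =>
    rw [Function.iterate_succ_apply']
    exact splits_derivative ih

theorem eval_mul_eval_derivative_le_sq {f : ℝ[X]} (hf : f.Splits) (x : ℝ) :
    f.eval x * (derivative (derivative f)).eval x ≤ (derivative f).eval x ^ 2 := by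
  induction hf using Submonoid.closure_induction with
  | mem f hf =>
    rcases hf with ⟨a, rfl⟩ | ⟨a, rfl⟩ <;> simp
  | one => simp
  | mul f g _ _ hf hg =>
    simp only [derivative_mul, derivative_add, eval_add, eval_mul]
    nlinarith [mul_nonneg (sq_nonneg (g.eval x)) (sub_nonneg.2 hf),
      mul_nonneg (sq_nonneg (f.eval x)) (sub_nonneg.2 hg)]

theorem eval_zero_iterate_derivative (p : ℝ[X]) (k : ℕ) :
    (derivative^[k] p).eval 0 = (k.factorial : ℝ) * p.coeff k := by
  rw [← coeff_zero_eq_eval_zero, coeff_iterate_derivative]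
  simp [Nat.descFactorial_self]

/-- The coefficient sequence of a real-rooted real polynomial of degree `n`
is log-concave: `a_j^2 ≥ a_{j-1} a_{j+1}` for `1 ≤ j ≤ n-1`. -/
theorem coeff_logConcave_of_realRooted (p : Polynomial ℝ) (n : ℕ)
    (hdeg : p.degree = n) (hrr : RealRooted p) :
    ∀ j, 1 ≤ j → j + 1 ≤ n → p.coeff (j - 1) * p.coeff (j + 1) ≤ (p.coeff j) ^ 2 := by
  intro j hj _
  obtain ⟨k, rfl⟩ := Nat.exists_eq_add_of_le' hj
  have h := eval_mul_eval_derivative_le_sq (splits_iterate_derivative hrr.splits k) 0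
  simp only [← Function.iterate_succ_apply' (f := derivative), eval_zero_iterate_derivative] at h
  simp only [Nat.succ_eq_add_one, Nat.factorial_succ, Nat.cast_mul, Nat.cast_add,
    Nat.cast_one] at h
  rw [Nat.add_sub_cancel]
  have hc : 0 < (k.factorial : ℝ) ^ 2 * (k + 1) := by positivity
  have h' : ((k : ℝ) + 2) * (p.coeff k * p.coeff (k + 1 + 1)) ≤ (k + 1) * p.coeff (k + 1) ^ 2 := by
    refine le_of_mul_le_mul_left ?_ hc
    linarith
  by_contra! hlt
  have hk : (0 : ℝ) ≤ k := k.cast_nonneg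
  nlinarith [sq_nonneg (p.coeff (k + 1))]
end

section
/- Let T be a tree on n ≥ 3 vertices, and for 0 ≤ k ≤ n−2 let δ_k(T) be the coefficient of x^k in det(𝒟(T) − xI). Then the sequence |δ_0(T)|, |δ_1(T)|, ..., |δ_{n−2}(T)| of absolute values of these coefficients is log-concave and unimodal. -/
/-!
For a tree `T`, the distance `d(i, j)` counts the edges whose deletion separates `i` from `j`
(`dist_eq_sum_separating`). For a fixed edge `e`, "not separated by deleting `e`" is an equivalence
relation, so its `0/1` matrix is positive semidefinite; hence the distance matrix is negative
semidefinite on vectors with coordinate sum `0` (`quadForm_nonpos`), and it has at most one positive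
eigenvalue (`eigenvalue_nonpos_or_nonpos`).

As the trace is `0`, the characteristic polynomial is, with `E = ∑ μᵢ` and all `μᵢ ≥ 0`,
`(X - E) * ∏ (X + μᵢ)`. Writing `fₖ` for the coefficients of the product over `m = n - 1` indices,
the inequality `(m - k) fₖ ≤ E fₖ₊₁` (`prod_coeff_bound`) shows that the coefficients `fₖ₋₁ - E fₖ`,
`k ≤ n - 2`, are all nonpositive, and that once one of them vanishes so do all those of smaller
index.

The characteristic polynomial of a real symmetric matrix splits over `ℝ`, so its coefficients satisfy
Newton's inequality `aₖ aₖ₊₂ ≤ aₖ₊₁²` (`newton_ineq`). As the coefficients have constant sign, the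
absolute values are log-concave, and the position of the zeros upgrades this to unimodality
(`unimodal_of_logConcave`).
-/

/-- A finite sequence `a 0, a 1, ..., a n` is log-concave if
`(a j)^2 ≥ a (j-1) * a (j+1)` for all `j = 1, ..., n-1`. -/
def SeqLogConcave (a : ℕ → ℝ) (n : ℕ) : Prop :=
  ∀ j, 1 ≤ j → j + 1 ≤ n → a (j - 1) * a (j + 1) ≤ (a j) ^ 2

/-- A finite sequence `a 0, a 1, ..., a n` is unimodal if there is an index `k`
such that `a (i-1) ≤ a i` for all `i ≤ k` and `a i ≥ a (i+1)` for all `i ≥ k`. -/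
def SeqUnimodal (a : ℕ → ℝ) (n : ℕ) : Prop :=
  ∃ k, (∀ i, 1 ≤ i → i ≤ k → i ≤ n → a (i - 1) ≤ a i) ∧
    (∀ i, k ≤ i → i + 1 ≤ n → a (i + 1) ≤ a i)

/-- The distance matrix of a graph `G`: the `(i,j)` entry is the graph
distance between `i` and `j`. -/
noncomputable def distMatrix {n : ℕ} (G : SimpleGraph (Fin n)) :
    Matrix (Fin n) (Fin n) ℝ :=
  fun i j => (G.dist i j : ℝ)

/-- The polynomial `det(𝒟(G) - xI)`, whose coefficient of `x^k` is `δ_k(G)`. -/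
noncomputable def deltaPoly {n : ℕ} (G : SimpleGraph (Fin n)) : Polynomial ℝ :=
  ((distMatrix G).map Polynomial.C
    - (Polynomial.X : Polynomial ℝ) • (1 : Matrix (Fin n) (Fin n) (Polynomial ℝ))).det

open Polynomial

/-! ### Log-concavity and unimodality -/

/-- A nonnegative log-concave sequence whose zeros form an initial segment is unimodal. -/
lemma unimodal_of_logConcave (a : ℕ → ℝ) (N : ℕ) (h0 : ∀ k, 0 ≤ a k)
    (hlc : SeqLogConcave a N) (hz : ∀ k, k + 1 ≤ N → a (k + 1) = 0 → a k = 0) :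
    SeqUnimodal a N := by
  classical
  by_cases hex : ∃ i, i + 1 ≤ N ∧ a (i + 1) < a i
  · -- The mode is the position of the first strict descent.
    obtain ⟨hk1, hk2⟩ := Nat.find_spec hex
    set k := Nat.find hex with hk
    refine ⟨k, ?_, ?_⟩
    · intro i hi hik hiN
      have := Nat.find_min hex (m := i - 1) (by omega)
      rw [Nat.sub_add_cancel hi] at this
      by_contra hcon
      exact this ⟨hiN, not_le.mp hcon⟩
    · have key : ∀ i, k ≤ i → i + 1 ≤ N → 0 < a i ∧ a (i + 1) ≤ a i := by
        intro i hi
        induction i, hi using Nat.le_induction with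
        | base => intro _; exact ⟨lt_of_le_of_lt (h0 _) hk2, hk2.le⟩
        | succ i hi ih =>
          intro hN
          obtain ⟨hp, hle⟩ := ih (by omega)
          have h1 : 0 < a (i + 1) :=
            lt_of_le_of_ne (h0 _) fun h => hp.ne' (hz i (by omega) h.symm)
          refine ⟨h1, ?_⟩
          have h2 := hlc (i + 1) (by omega) hN
          simp only [Nat.add_sub_cancel] at h2
          by_contra hcon
          push Not at hcon
          nlinarith
      exact fun i hi hN => (key i hi hN).2
  · push Not at hex
    refine ⟨N, ?_, fun i hi hN => by omega⟩
    intro i hi _ hiN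
    have := hex (i - 1) (by omega)
    rwa [Nat.sub_add_cancel hi] at this

/-! ### Newton's inequality for real-rooted polynomials -/

lemma splits_derivative_real {p : ℝ[X]} (hp : p.Splits) : (derivative p).Splits := by
  rw [splits_iff_card_roots] at hp ⊢
  have h1 := card_roots_le_derivative p
  have h2 := card_roots' (derivative p)
  have h3 := natDegree_derivative_le p
  rcases Nat.eq_zero_or_pos p.natDegree with h | h <;> omega

/-- Laguerre's inequality `p p'' ≤ p'²` at `0`, in terms of coefficients. -/
lemma newton_zero {p : ℝ[X]} (hp : p.Splits) :
    2 * (p.coeff 0 * p.coeff 2) ≤ p.coeff 1 ^ 2 := by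
  rw [hp.eq_prod_roots]
  simp only [coeff_C_mul]
  suffices h : ∀ s : Multiset ℝ, 2 * ((s.map fun a => X - C a).prod.coeff 0 *
      (s.map fun a => X - C a).prod.coeff 2) ≤ (s.map fun a => X - C a).prod.coeff 1 ^ 2 by
    have := mul_le_mul_of_nonneg_left (h p.roots) (sq_nonneg p.leadingCoeff)
    linarith
  intro s
  induction s using Multiset.induction with
  | empty => simp [coeff_one]
  | cons r s ih =>
    simp only [Multiset.map_cons, Multiset.prod_cons]
    generalize (s.map fun a => X - C a).prod = q at ih ⊢
    have e0 : ((X - C r) * q).coeff 0 = - (r * q.coeff 0) := by simp [mul_coeff_zero]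
    have e1 : ((X - C r) * q).coeff 1 = q.coeff 0 - r * q.coeff 1 := coeff_X_sub_C_mul
    have e2 : ((X - C r) * q).coeff 2 = q.coeff 1 - r * q.coeff 2 := coeff_X_sub_C_mul
    rw [e0, e1, e2]
    nlinarith [sq_nonneg (q.coeff 0), mul_le_mul_of_nonneg_left ih (sq_nonneg r)]

/-- A Newton inequality for real-rooted polynomials, obtained by applying `newton_zero` to the
iterated derivatives. -/
lemma newton_strong (k : ℕ) : ∀ {p : ℝ[X]}, p.Splits →
    ((k : ℝ) + 2) * (p.coeff k * p.coeff (k + 2)) ≤ (k + 1) * p.coeff (k + 1) ^ 2 := by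
  induction k with
  | zero => intro p hp; simpa using newton_zero hp
  | succ k ih =>
    intro p hp
    have h := ih (splits_derivative_real hp)
    simp only [coeff_derivative] at h
    push_cast at h ⊢
    have hpos : (0 : ℝ) < (k + 1) * (k + 2) := by positivity
    refine le_of_mul_le_mul_left ?_ hpos
    linarith

lemma newton_ineq {p : ℝ[X]} (hp : p.Splits) (k : ℕ) :
    p.coeff k * p.coeff (k + 2) ≤ p.coeff (k + 1) ^ 2 := by
  have h := newton_strong k hp
  have hk : (0 : ℝ) ≤ k := Nat.cast_nonneg k
  by_contra hcon
  push Not at hcon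
  nlinarith [sq_nonneg (p.coeff (k + 1))]

/-! ### Coefficients of `∏ (X + μᵢ)` -/

/-- In terms of elementary symmetric functions of nonnegative numbers, this is the inequality
`(j + 1) e_{j+1} ≤ e₁ e_j`, where `j = s.card - k - 1`. -/
lemma prod_coeff_bound {ι : Type*} (s : Finset ι) (μ : ι → ℝ) (hμ : ∀ i ∈ s, 0 ≤ μ i) :
    ∀ k : ℕ, 0 ≤ (∏ i ∈ s, (X + C (μ i))).coeff k ∧
      ((s.card : ℝ) - k) * (∏ i ∈ s, (X + C (μ i))).coeff k ≤
        (∑ i ∈ s, μ i) * (∏ i ∈ s, (X + C (μ i))).coeff (k + 1) := by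
  classical
  induction s using Finset.induction_on with
  | empty =>
    intro k
    rcases k with _ | k <;> simp [coeff_one]
  | insert b s hb ih =>
    have ih' := ih fun i hi => hμ i (Finset.mem_insert_of_mem hi)
    have ha : 0 ≤ μ b := hμ b (Finset.mem_insert_self _ _)
    have hE : 0 ≤ ∑ i ∈ s, μ i :=
      Finset.sum_nonneg fun i hi => hμ i (Finset.mem_insert_of_mem hi)
    simp only [Finset.prod_insert hb, Finset.sum_insert hb, Finset.card_insert_of_notMem hb]
    clear ih hμ
    generalize (∏ i ∈ s, (X + C (μ i))) = q at ih' ⊢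
    generalize (∑ i ∈ s, μ i) = E at hE ih' ⊢
    generalize μ b = a at ha ⊢
    have e0 : ((X + C a) * q).coeff 0 = a * q.coeff 0 := by simp [mul_coeff_zero]
    have es : ∀ k, ((X + C a) * q).coeff (k + 1) = q.coeff k + a * q.coeff (k + 1) := by
      intro k; rw [add_mul, coeff_add, coeff_X_mul, coeff_C_mul]
    intro k
    rcases k with _ | k
    · rw [e0, es]
      obtain ⟨p0, h0⟩ := ih' 0
      obtain ⟨p1, -⟩ := ih' 1
      simp only [zero_add] at *
      push_cast at *
      refine ⟨by positivity, ?_⟩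
      nlinarith [mul_le_mul_of_nonneg_left h0 ha, mul_nonneg hE p0,
        mul_nonneg (mul_nonneg ha ha) p1]
    · rw [es, es]
      obtain ⟨p0, h0⟩ := ih' k
      obtain ⟨p1, h1⟩ := ih' (k + 1)
      obtain ⟨p2, -⟩ := ih' (k + 2)
      push_cast at *
      refine ⟨by positivity, ?_⟩
      have h1' := mul_le_mul_of_nonneg_left h1 ha
      have h2 := mul_nonneg (mul_nonneg ha ha) p2
      have e : q.coeff (k + 1 + 1) = q.coeff (k + 2) := rfl
      rw [e] at *
      nlinarith

/-! ### The distance matrix of a tree -/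

open Classical in
/-- In a tree, `d(i, j)` is the number of edges whose deletion separates `i` from `j`. -/
lemma dist_eq_sum_separating {n : ℕ} {G : SimpleGraph (Fin n)} (hG : G.IsTree) (i j : Fin n) :
    (G.dist i j : ℝ) =
      ∑ e ∈ G.edgeFinset, (1 - if (G.deleteEdges {e}).Reachable i j then (1 : ℝ) else 0) := by
  obtain ⟨p, hp, hlen⟩ := hG.connected.exists_path_of_dist i j
  have hset : G.edgeFinset.filter (fun e => ¬ (G.deleteEdges {e}).Reachable i j)
      = p.edges.toFinset := by
    ext e
    simp only [Finset.mem_filter, SimpleGraph.mem_edgeFinset, List.mem_toFinset]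
    constructor
    · rintro ⟨-, h⟩
      by_contra hcon
      exact h ⟨p.toDeleteEdges {e} fun e' he' h' => hcon (h' ▸ he')⟩
    · intro he
      refine ⟨p.edges_subset_edgeSet he, fun hr => ?_⟩
      -- A path avoiding `e` would be a second path in `G` from `i` to `j`.
      obtain ⟨q, hq⟩ := hr.exists_isPath
      have hle : G.deleteEdges {e} ≤ G := SimpleGraph.deleteEdges_le _
      have hpq : p = q.mapLe hle :=
        (hG.existsUnique_path i j).unique hp (hq.mapLe hle)
      rw [hpq, SimpleGraph.Walk.edges_mapLe_eq_edges] at he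
      have := q.edges_subset_edgeSet he
      simp at this
  have hcard : (p.edges.toFinset).card = p.length := by
    rw [List.toFinset_card_of_nodup hp.isTrail.edges_nodup, SimpleGraph.Walk.length_edges]
  rw [← hlen, ← hcard, ← hset, Finset.card_filter, Nat.cast_sum]
  refine Finset.sum_congr rfl fun e _ => ?_
  split_ifs <;> simp_all

open Classical in
/-- The `0/1` matrix of an equivalence relation is positive semidefinite. -/
lemma quadForm_equiv_nonneg {n : ℕ} (s : Setoid (Fin n)) (x : Fin n → ℝ) :
    0 ≤ ∑ i, ∑ j, x i * x j * (if s i j then (1 : ℝ) else 0) := by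
  have h : ∑ i, ∑ j, x i * x j * (if s i j then (1 : ℝ) else 0) =
      ∑ c : Quotient s, (∑ i, if Quotient.mk s i = c then x i else 0) ^ 2 := by
    simp only [sq, Finset.sum_mul_sum]
    conv_rhs => rw [Finset.sum_comm]
    refine Finset.sum_congr rfl fun i _ => ?_
    rw [Finset.sum_comm]
    refine Finset.sum_congr rfl fun j _ => ?_
    rw [Finset.sum_eq_single (Quotient.mk s i)]
    · have : (Quotient.mk s j = Quotient.mk s i) ↔ s i j := by
        rw [Quotient.eq]; exact ⟨s.symm', s.symm'⟩
      simp [this]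
    · intro c _ hc
      simp [hc.symm]
    · simp
  rw [h]
  exact Finset.sum_nonneg fun _ _ => sq_nonneg _

/-- The distance matrix of a tree is negative semidefinite on the vectors with coordinate
sum `0`. -/
lemma quadForm_nonpos {n : ℕ} {G : SimpleGraph (Fin n)} (hG : G.IsTree) (x : Fin n → ℝ)
    (hx : ∑ i, x i = 0) : x ⬝ᵥ (distMatrix G).mulVec x ≤ 0 := by
  classical
  have h : x ⬝ᵥ (distMatrix G).mulVec x = ∑ e ∈ G.edgeFinset, ((∑ i, x i) * (∑ j, x j) -
      ∑ i, ∑ j, x i * x j *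
        (if (G.deleteEdges {e}).reachableSetoid i j then (1 : ℝ) else 0)) := by
    simp only [dotProduct, Matrix.mulVec, distMatrix, dist_eq_sum_separating hG,
      ← Finset.sum_sub_distrib, Finset.mul_sum, Finset.sum_mul]
    rw [Finset.sum_comm' (s := G.edgeFinset) (t := fun _ => Finset.univ)
      (t' := Finset.univ) (s' := fun _ => G.edgeFinset) (by simp)]
    refine Finset.sum_congr rfl fun i _ => ?_
    rw [Finset.sum_comm' (s := G.edgeFinset) (t := fun _ => Finset.univ)
      (t' := Finset.univ) (s' := fun _ => G.edgeFinset) (by simp)]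
    refine Finset.sum_congr rfl fun j _ => Finset.sum_congr rfl fun e _ => ?_
    have hr : (G.deleteEdges {e}).reachableSetoid i j ↔ (G.deleteEdges {e}).Reachable i j := Iff.rfl
    by_cases h : (G.deleteEdges {e}).Reachable i j <;> simp [hr, h, mul_comm]
  rw [h]
  refine Finset.sum_nonpos fun e _ => ?_
  have := quadForm_equiv_nonneg (G.deleteEdges {e}).reachableSetoid x
  rw [hx]
  linarith

lemma distMatrix_isHermitian {n : ℕ} (G : SimpleGraph (Fin n)) :
    (distMatrix G).IsHermitian := by
  ext i j
  simp [distMatrix, SimpleGraph.dist_comm]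

/-- The distance matrix of a tree has at most one positive eigenvalue: two eigenvectors for
positive eigenvalues would span a plane on which the quadratic form is positive definite, and this
plane would meet the hyperplane of vectors with coordinate sum `0` nontrivially. -/
lemma eigenvalue_nonpos_or_nonpos {n : ℕ} {G : SimpleGraph (Fin n)} (hG : G.IsTree)
    {i j : Fin n} (hij : i ≠ j) :
    (distMatrix_isHermitian G).eigenvalues i ≤ 0 ∨
      (distMatrix_isHermitian G).eigenvalues j ≤ 0 := by
  set hA := distMatrix_isHermitian G
  by_contra hcon
  push Not at hcon
  obtain ⟨hi, hj⟩ := hcon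
  set u : Fin n → ℝ := ⇑(hA.eigenvectorBasis i) with hu
  set v : Fin n → ℝ := ⇑(hA.eigenvectorBasis j) with hv
  have hAu : (distMatrix G).mulVec u = hA.eigenvalues i • u := hA.mulVec_eigenvectorBasis i
  have hAv : (distMatrix G).mulVec v = hA.eigenvalues j • v := hA.mulVec_eigenvectorBasis j
  have inn : ∀ a b, (hA.eigenvectorBasis a : Fin n → ℝ) ⬝ᵥ (hA.eigenvectorBasis b : Fin n → ℝ)
      = if a = b then 1 else 0 := by
    intro a b
    have := orthonormal_iff_ite.mp hA.eigenvectorBasis.orthonormal a b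
    rw [← this]
    simp [PiLp.inner_apply, dotProduct, mul_comm]
  have huu : u ⬝ᵥ u = 1 := by rw [hu, inn]; simp
  have hvv : v ⬝ᵥ v = 1 := by rw [hv, inn]; simp
  have huv : u ⬝ᵥ v = 0 := by rw [hu, hv, inn]; simp [hij]
  have hvu : v ⬝ᵥ u = 0 := by rw [dotProduct_comm, huv]
  have key : ∀ c d : ℝ, c * (∑ k, u k) + d * (∑ k, v k) = 0 →
      c ^ 2 * hA.eigenvalues i + d ^ 2 * hA.eigenvalues j ≤ 0 := by
    intro c d hcd
    have h := quadForm_nonpos hG (c • u + d • v) (by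
      simpa [Finset.sum_add_distrib, Finset.mul_sum] using hcd)
    rw [Matrix.mulVec_add, Matrix.mulVec_smul, Matrix.mulVec_smul, hAu, hAv] at h
    simp only [add_dotProduct, dotProduct_add, smul_dotProduct, dotProduct_smul, huu, hvv, huv,
      hvu, smul_eq_mul] at h
    linarith
  have h1 := key (∑ k, v k) (-(∑ k, u k)) (by ring)
  have hs : (∑ k, u k) = 0 := by
    by_contra hne
    have : 0 < (∑ k, u k) ^ 2 := by positivity
    nlinarith [mul_pos this hj, mul_nonneg (sq_nonneg (∑ k, v k)) hi.le]
  have h2 := key 1 0 (by rw [hs]; ring)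
  linarith

lemma abs_coeff_deltaPoly {n : ℕ} (G : SimpleGraph (Fin n)) (k : ℕ) :
    |(deltaPoly G).coeff k| = |(distMatrix G).charpoly.coeff k| := by
  have h : deltaPoly G = (-1) ^ n * (distMatrix G).charpoly := by
    have : (distMatrix G).map C - (X : ℝ[X]) • (1 : Matrix (Fin n) (Fin n) ℝ[X]) =
        -(distMatrix G).charmatrix := by
      rw [Matrix.charmatrix, neg_sub, Matrix.smul_one_eq_diagonal]
      rfl
    rw [deltaPoly, this, Matrix.det_neg, Fintype.card_fin]
    rfl
  rw [h]
  rcases neg_one_pow_eq_or ℝ[X] n with h | h <;> simp [h]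

/-- The coefficients of the characteristic polynomial are nonpositive up to degree `n - 2`, and
among these the vanishing ones are those of smallest index. -/
lemma charpoly_coeff_sign {n : ℕ} (hn : 3 ≤ n) {G : SimpleGraph (Fin n)} (hG : G.IsTree) :
    (∀ k, k ≤ n - 2 → (distMatrix G).charpoly.coeff k ≤ 0) ∧
    (∀ k, k + 1 ≤ n - 2 → (distMatrix G).charpoly.coeff (k + 1) = 0 →
      (distMatrix G).charpoly.coeff k = 0) := by
  set hA := distMatrix_isHermitian G
  obtain ⟨p, hp⟩ : ∃ p, ∀ i, i ≠ p → hA.eigenvalues i ≤ 0 := by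
    by_cases h : ∃ p, 0 < hA.eigenvalues p
    · obtain ⟨p, hp⟩ := h
      exact ⟨p, fun i hi => (eigenvalue_nonpos_or_nonpos hG hi).resolve_right (not_le.mpr hp)⟩
    · push Not at h
      exact ⟨⟨0, by omega⟩, fun i _ => h i⟩
  set s : Finset (Fin n) := Finset.univ.erase p with hs
  have hμ : ∀ i ∈ s, 0 ≤ -hA.eigenvalues i := fun i hi => by
    linarith [hp i (Finset.ne_of_mem_erase hi)]
  have hcard : s.card = n - 1 := by simp [hs]
  have htr : hA.eigenvalues p = ∑ i ∈ s, -hA.eigenvalues i := by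
    have h1 : (distMatrix G).trace = 0 := by simp [Matrix.trace, distMatrix]
    have h2 := hA.trace_eq_sum_eigenvalues
    rw [h1, ← Finset.add_sum_erase _ _ (Finset.mem_univ p)] at h2
    simp only [RCLike.ofReal_real_eq_id, id] at h2
    rw [Finset.sum_neg_distrib]
    linarith
  have hchar : (distMatrix G).charpoly = (X - C (∑ i ∈ s, -hA.eigenvalues i)) *
      ∏ i ∈ s, (X + C (-hA.eigenvalues i)) := by
    rw [hA.charpoly_eq, ← Finset.mul_prod_erase _ _ (Finset.mem_univ p), ← htr]
    simp [sub_eq_add_neg, hs]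
  have hb := prod_coeff_bound s (fun i => -hA.eigenvalues i) hμ
  have hE := Finset.sum_nonneg hμ
  rw [hchar]
  have hm : (s.card : ℝ) = n - 1 := by rw [hcard]; push_cast [show 1 ≤ n by omega]; ring
  simp only [hm] at hb
  generalize (∏ i ∈ s, (X + C (-hA.eigenvalues i))) = q at hb ⊢
  generalize (∑ i ∈ s, -hA.eigenvalues i) = E at hE hb ⊢
  have e0 : ((X - C E) * q).coeff 0 = -(E * q.coeff 0) := by simp [mul_coeff_zero]
  have es : ∀ k, ((X - C E) * q).coeff (k + 1) = q.coeff k - E * q.coeff (k + 1) :=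
    fun k => coeff_X_sub_C_mul
  have main : ∀ k, k + 1 ≤ n - 2 → ((X - C E) * q).coeff (k + 1) ≤ -q.coeff k := by
    intro k hk
    rw [es]
    obtain ⟨h0, h1⟩ := hb k
    have : (k : ℝ) + 3 ≤ n := by exact_mod_cast (by omega : k + 3 ≤ n)
    nlinarith
  have hneg : ∀ k, k ≤ n - 2 → ((X - C E) * q).coeff k ≤ 0 := by
    intro k hk
    rcases k with _ | k
    · rw [e0]; nlinarith [mul_nonneg hE (hb 0).1]
    · linarith [main k hk, (hb k).1]
  refine ⟨hneg, fun k hk h => ?_⟩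
  have hq : q.coeff k = 0 := le_antisymm (by linarith [main k hk]) (hb k).1
  rcases k with _ | k
  · rw [e0, hq]; simp
  · refine le_antisymm (hneg _ (by omega)) ?_
    rw [es, hq]
    linarith [(hb k).1]

/-- For a tree `T` on `n ≥ 3` vertices, the sequence
`|δ_0(T)|, ..., |δ_{n-2}(T)|` of absolute values of the coefficients of the
distance characteristic polynomial is log-concave and unimodal. -/
theorem abs_delta_logConcave_unimodal (n : ℕ) (hn : 3 ≤ n)
    (G : SimpleGraph (Fin n)) (hG : G.IsTree) :
    SeqLogConcave (fun k => |(deltaPoly G).coeff k|) (n - 2) ∧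
    SeqUnimodal (fun k => |(deltaPoly G).coeff k|) (n - 2) := by
  obtain ⟨hneg, hzero⟩ := charpoly_coeff_sign hn hG
  simp only [abs_coeff_deltaPoly]
  have hlc : SeqLogConcave (fun k => |(distMatrix G).charpoly.coeff k|) (n - 2) := by
    intro j hj1 hj2
    obtain ⟨k, rfl⟩ : ∃ k, j = k + 1 := ⟨j - 1, by omega⟩
    simp only [Nat.add_sub_cancel, sq_abs]
    rw [← abs_mul, abs_of_nonneg (mul_nonneg_of_nonpos_of_nonpos (hneg _ (by omega)) (hneg _ hj2))]
    exact newton_ineq (distMatrix_isHermitian G).splits_charpoly k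
  refine ⟨hlc, unimodal_of_logConcave _ _ (fun k => abs_nonneg _) hlc fun k hk h => ?_⟩
  rw [abs_eq_zero] at h ⊢
  exact hzero k hk h
end

section
/- Let a_0, a_1, ..., a_n be real numbers with a_i > 0 for 0 ≤ i ≤ n−2, such that the sequence a_0, ..., a_{n−2} is unimodal and the polynomial Σ_{k=0}^{n} a_k x^k is real-rooted of degree n. If j is an index with 1 ≤ j ≤ n−2 such that ((n−2)(n−j+1)/(3j))·(a_{n−2}/a_{n−3}) > 1, then every index m with 0 ≤ m ≤ n−2 at which the sequence a_0, ..., a_{n−2} attains its maximum satisfies m ≥ j. -/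
open Polynomial

theorem splits_of_realRooted {p : ℝ[X]} (h : RealRooted p) : p.Splits := by
  refine Splits.of_splits_map_of_injective (i := algebraMap ℝ ℂ) (algebraMap ℝ ℂ).injective
    (IsAlgClosed.splits _) ?_
  intro z hz
  have hz0 : aeval z p = 0 := by
    rw [aeval_def, ← eval_map]
    exact (mem_roots'.1 hz).2
  exact ⟨z.re, Complex.ext (by simp) (by simp [h z hz0])⟩

/-- By Rolle's theorem, differentiation loses at most one root, so it preserves splitting
over `ℝ`. -/
theorem splits_derivative_s9 {p : ℝ[X]} (h : p.Splits) : (derivative p).Splits := by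
  rw [splits_iff_card_roots] at h ⊢
  have h1 := card_roots_le_derivative p
  have h2 := card_roots' (derivative p)
  have h3 := natDegree_derivative_le p
  omega

/-- The Laguerre inequality for a product of real linear factors. -/
theorem laguerre_prod (s : Multiset ℝ) (x : ℝ) :
    (s.card : ℝ) * (((s.map fun r => X - C r).prod).eval x *
        (derivative (derivative (s.map fun r => X - C r).prod)).eval x) ≤
      ((s.card : ℝ) - 1) * (derivative (s.map fun r => X - C r).prod).eval x ^ 2 := by
  induction s using Multiset.induction with
  | empty => simp
  | cons r s ih =>
    simp only [Multiset.map_cons, Multiset.prod_cons, Multiset.card_cons]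
    generalize hq : (s.map fun r => X - C r).prod = q at ih ⊢
    have hd0 : s.card = 0 ∨ 1 ≤ (s.card : ℝ) := by
      rcases Nat.eq_zero_or_pos s.card with h | h
      · exact Or.inl h
      · exact Or.inr (by exact_mod_cast h)
    simp only [derivative_mul, derivative_sub, derivative_X, derivative_C, eval_add, eval_mul,
      eval_sub, eval_X, eval_C, sub_zero, one_mul, derivative_add, Nat.cast_add,
      Nat.cast_one]
    have hring : ∀ d u A B D : ℝ, d = 0 ∧ B = 0 ∧ D = 0 ∨ 1 ≤ d → d * (A * D) ≤ (d - 1) * B ^ 2 →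
        (d + 1) * (u * A * (B + (B + u * D))) ≤ (d + 1 - 1) * (A + u * B) ^ 2 := by
      rintro d u A B D (⟨rfl, rfl, rfl⟩ | hd) h
      · simp
      -- Multiplied by `d`, the difference of the two sides is at least `(d A - u B)²`.
      · refine le_of_mul_le_mul_left ?_ (by linarith : (0 : ℝ) < d)
        nlinarith [sq_nonneg (d * A - u * B),
          mul_le_mul_of_nonneg_left h (by positivity : 0 ≤ (d + 1) * u ^ 2)]
    refine hring _ _ _ _ _ ?_ ih
    rcases hd0 with h | h
    · obtain rfl := Multiset.card_eq_zero.1 h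
      left
      subst hq
      simp
    · exact Or.inr h

/-- Newton's inequality for the three lowest coefficients. -/
theorem newton_coeff_zero {p : ℝ[X]} (h : p.Splits) :
    2 * (p.natDegree : ℝ) * (p.coeff 0 * p.coeff 2) ≤
      ((p.natDegree : ℝ) - 1) * p.coeff 1 ^ 2 := by
  have key := laguerre_prod p.roots 0
  have hp := h.eq_prod_roots
  set q := (p.roots.map fun r => X - C r).prod with hq
  have e0 : q.eval 0 = q.coeff 0 := (coeff_zero_eq_eval_zero q).symm
  have e1 : (derivative q).eval 0 = q.coeff 1 := by
    rw [← coeff_zero_eq_eval_zero, coeff_derivative]; simp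
  have e2 : (derivative (derivative q)).eval 0 = q.coeff 2 * 2 := by
    rw [← coeff_zero_eq_eval_zero, coeff_derivative, coeff_derivative]; norm_num
  rw [e0, e1, e2, ← h.natDegree_eq_card_roots] at key
  have c : ∀ i, p.coeff i = p.leadingCoeff * q.coeff i := fun i => by
    conv_lhs => rw [hp]
    rw [coeff_C_mul]
  rw [c 0, c 1, c 2]
  nlinarith [mul_le_mul_of_nonneg_left key (sq_nonneg p.leadingCoeff)]

/-- Newton's inequalities. The case of index `i + 1` is the case of index `i` for the derivative. -/
theorem newton_coeff (i : ℕ) {p : ℝ[X]} (h : p.Splits) (hi : i + 1 ≤ p.natDegree) :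
    ((p.natDegree : ℝ) - i) * (i + 2) * (p.coeff i * p.coeff (i + 2)) ≤
      ((p.natDegree : ℝ) - i - 1) * (i + 1) * p.coeff (i + 1) ^ 2 := by
  induction i generalizing p with
  | zero =>
    have := newton_coeff_zero h
    norm_num at this ⊢
    linarith
  | succ i ih =>
    have hd : (derivative p).natDegree = p.natDegree - 1 := natDegree_derivative p
    have hd' : ((derivative p).natDegree : ℝ) = p.natDegree - 1 := by
      rw [hd, Nat.cast_sub (by omega)]; simp
    have key := ih (splits_derivative_s9 h) (by omega)
    rw [hd', coeff_derivative, coeff_derivative, coeff_derivative] at key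
    push_cast at key ⊢
    have hpos : (0 : ℝ) < (i + 1) * (i + 2) := by positivity
    refine le_of_mul_le_mul_left ?_ hpos
    ring_nf at key ⊢
    linarith

/-- Lower bound on the peak location: if `a 0, ..., a (n-2)` is positive
and unimodal, `∑_{k=0}^n a_k x^k` is real-rooted of degree `n`, and for
some `1 ≤ j ≤ n-2` we have `((n-2)(n-j+1)/(3j)) (a (n-2) / a (n-3)) > 1`,
then every index `m ≤ n-2` at which the sequence attains its maximum
satisfies `m ≥ j`. -/
theorem peak_lower_bound (n : ℕ) (a : ℕ → ℝ)
    (hpos : ∀ i ≤ n - 2, 0 < a i)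
    (huni : SeqUnimodal a (n - 2))
    (hdeg : (∑ k ∈ Finset.range (n + 1), Polynomial.C (a k) * Polynomial.X ^ k).degree
      = (n : WithBot ℕ))
    (hrr : RealRooted (∑ k ∈ Finset.range (n + 1), Polynomial.C (a k) * Polynomial.X ^ k))
    (j : ℕ) (hj1 : 1 ≤ j) (hj : j ≤ n - 2)
    (hcond : 1 < (((n : ℝ) - 2) * ((n : ℝ) - j + 1) / (3 * j)) * (a (n - 2) / a (n - 3))) :
    ∀ m ≤ n - 2, (∀ i ≤ n - 2, a i ≤ a m) → j ≤ m := by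
  have hn : 3 ≤ n := by omega
  set p := ∑ k ∈ Finset.range (n + 1), C (a k) * X ^ k with hp
  have hnat : p.natDegree = n := natDegree_eq_of_degree_eq_some hdeg
  have hcoeff : ∀ i ≤ n, p.coeff i = a i := by
    intro i hi
    simp [hp, coeff_X_pow, Nat.lt_succ_of_le hi]
  have hs := splits_of_realRooted hrr
  -- Newton's inequality in the form: `(i+1) / (n-i) * (a (i+1) / a i)` is nonincreasing.
  have step : ∀ i, i + 2 ≤ n - 2 →
      ((i : ℝ) + 2) / (n - i - 1) * (a (i + 2) / a (i + 1)) ≤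
        ((i : ℝ) + 1) / (n - i) * (a (i + 1) / a i) := by
    intro i hi
    have key := newton_coeff i hs (by omega)
    rw [hnat, hcoeff i (by omega), hcoeff (i + 1) (by omega), hcoeff (i + 2) (by omega)] at key
    have h0 := hpos i (by omega)
    have h1 := hpos (i + 1) (by omega)
    have hni : ((i : ℝ) + 4) ≤ n := by exact_mod_cast (by omega : i + 4 ≤ n)
    have hn1 : (0 : ℝ) < n - i - 1 := by linarith
    have hn0 : (0 : ℝ) < n - i := by linarith
    rw [div_mul_div_comm, div_mul_div_comm, div_le_div_iff₀ (by positivity) (by positivity)]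
    nlinarith [key]
  have chain : ∀ d i, i + d + 1 ≤ n - 2 →
      (((i + d : ℕ) : ℝ) + 1) / (n - (i + d : ℕ)) * (a (i + d + 1) / a (i + d)) ≤
        ((i : ℝ) + 1) / (n - i) * (a (i + 1) / a i) := by
    intro d
    induction d with
    | zero => intro i _; simp
    | succ d ih =>
      intro i hi
      refine le_trans (le_of_eq ?_) ((step (i + d) (by omega)).trans (ih i (by omega)))
      have e1 : ((i + (d + 1) : ℕ) : ℝ) + 1 = ((i + d : ℕ) : ℝ) + 2 := by push_cast; ring
      have e2 : (n : ℝ) - (i + (d + 1) : ℕ) = n - (i + d : ℕ) - 1 := by push_cast; ring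
      rw [e1, e2]
      rfl
  obtain ⟨j, rfl⟩ : ∃ l, j = l + 1 := ⟨j - 1, by omega⟩
  have hasc : a j < a (j + 1) := by
    have key := chain (n - 3 - j) j (by omega)
    have hjn : j + (n - 3 - j) = n - 3 := by omega
    have hn3 : n - 3 + 1 = n - 2 := by omega
    rw [hjn, hn3, Nat.cast_sub hn] at key
    have h0 := hpos j (by omega)
    have hnj : ((j : ℝ) + 3) ≤ n := by exact_mod_cast (by omega : j + 3 ≤ n)
    have hn0 : (0 : ℝ) < n - j := by linarith
    rw [← one_lt_div h0]
    generalize a (j + 1) / a j = r at key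
    generalize a (n - 2) / a (n - 3) = t at key hcond
    push_cast at key hcond
    have e1 : ((n : ℝ) - 3 + 1) / (n - (n - 3)) * t = (n - 2) / 3 * t := by ring
    rw [e1, div_mul_eq_mul_div ((j : ℝ) + 1), le_div_iff₀ hn0] at key
    have e2 : ((n : ℝ) - 2) * (n - (j + 1) + 1) / (3 * (j + 1)) * t
        = ((n - 2) / 3 * t * (n - j)) / (j + 1) := by
      field_simp
      ring
    rw [e2, one_lt_div (by positivity)] at hcond
    have hj0 : (0 : ℝ) < j + 1 := by positivity
    nlinarith
  intro m hm hmax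
  obtain ⟨k, hup, hdown⟩ := huni
  by_contra! hlt
  have hjk : j + 1 ≤ k := by
    by_contra! hk
    exact absurd (hdown j (by omega) (by omega)) (not_le.2 hasc)
  have hmono : ∀ d, m + d ≤ j → a m ≤ a (m + d) := by
    intro d
    induction d with
    | zero => intro _; simp
    | succ d ih =>
      intro hd
      exact (ih (by omega)).trans (hup (m + d + 1) (by omega) (by omega) (by omega))
  have h1 := hmono (j - m) (by omega)
  rw [Nat.add_sub_cancel' (by omega)] at h1
  have h2 := hmax (j + 1) hj
  linarith
end
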